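/- Let $(X,d)$ be a compact metric space, $T:X\to X$ a homeomorphism, and $\mu$ a $T$-invariant Borel probability measure such that $\int_X \log^+\big(\sup_{y\in B(x,r)\setminus\{x\}}\frac{d(Tx,Ty)}{d(x,y)}\big)\,d\mu(x) < \infty$ for some $r>0$. Then: (i) the pointwise limit $\chi(x) := \lim_{n\to\infty}\frac1n\log^+\mathcal{L}_n(x)$ exists $\mu$-a.e. and in $L^1(\mu)$, where $\mathcal{L}_n(x)$ is the pointwise Lipschitz constant of $T^n$ at $x$; (ii) for each $s\in(0,r]$, $\Lambda^s(x) := \lim_{n\to\infty}\frac1n\log^+\mathcal{L}_n^s(x)$ exists $\mu$-a.e. and in $L^1(\mu)$, where $\mathcal{L}_n^s(x) := \sup_{y\in B_n(x,s)\setminus\{x\}}\frac{d(T^nx,T^ny)}{d(x,y)}$; and (iii) for any sequence $s_m\searrow 0$ with $s_1\le r$, $\chi(x) = \lim_{m\to\infty}\Lambda^{s_m}(x)$ holds $\mu$-a.e. and in $L^1(\mu)$. -/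

import Mathlib

/-!
By the chain rule on Bowen balls, `n ↦ log⁺ 𝓛ₙˢ` is subadditive over `T` (injectivity of `T` keeps
difference quotients meaningful), and letting `s ↘ 0` so is `n ↦ log⁺ 𝓛ₙ`. For `s ≤ r` both are
dominated by `log⁺ 𝓛ₙʳ`, whose first term is integrable, so the existence of `χ` and `Λˢ`, almost
everywhere and in `L¹`, is Kingman's theorem for nonnegative processes. The functions are
measurable because `𝓛ₙˢ` is lower semicontinuous.

Kingman's theorem is proved for a process `f ≥ 0` by the Katznelson–Weiss method. Let `g` be the
lower limit of `f n / n`; it is integrable by Fatou and invariant because `g ≤ g ∘ T`. An orbit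
segment is cut into good blocks of length at most `N`, on which `f` is at most `g + ε` per step,
and bad single steps (`covering`, `le_decomposition`). The bad steps contribute a Birkhoff sum of
a function whose integral tends to `0` as `N → ∞`. Garsia's maximal inequality (`garsia`,
`maximal_ineq`) makes these sums pointwise small relative to `n`, which gives almost everywhere
convergence; integrating the same decomposition gives convergence in `L¹`.

For the limit `s_m ↘ 0`, the functions `Λ^{s_m}` decrease and stay above `χ`. Since
`∫ Λˢ = inf_n (1/n) ∫ log⁺ 𝓛ₙˢ` and `∫ log⁺ 𝓛ₙ^{s_m} → ∫ log⁺ 𝓛ₙ` by domination, exchanging the two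
infima gives `∫ Λ^{s_m} → ∫ χ`, which forces convergence in `L¹` and almost everywhere
(`iterated_limit`).
-/

open MeasureTheory Filter Set Topology
open scoped ENNReal

/-- The Bowen ball of step-length `n` and radius `s` centered at `x`. -/
def bowenBall {X : Type*} [PseudoMetricSpace X] (T : X → X) (n : ℕ) (x : X) (s : ℝ) : Set X :=
  {y | ∀ k < n, dist (T^[k] x) (T^[k] y) < s}

/-- `𝓛ₙˢ(x) = sup_{y ∈ Bₙ(x,s) \ {x}} d(Tⁿx, Tⁿy)/d(x,y)`, with `sup ∅ = 0`. -/
noncomputable def lipBowen {X : Type*} [PseudoMetricSpace X] (T : X → X) (n : ℕ) (s : ℝ)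
    (x : X) : ℝ≥0∞ :=
  ⨆ y ∈ bowenBall T n x s \ {x}, ENNReal.ofReal (dist (T^[n] x) (T^[n] y) / dist x y)

/-- The pointwise Lipschitz constant `𝓛ₙ(x) = lim_{s ↘ 0} 𝓛ₙˢ(x)`. -/
noncomputable def pointwiseLip {X : Type*} [PseudoMetricSpace X] (T : X → X) (n : ℕ)
    (x : X) : ℝ≥0∞ :=
  ⨅ (s : ℝ) (_ : 0 < s), lipBowen T n s x

/-- `log⁺` on `[0,∞]`. -/
noncomputable def logPlus (a : ℝ≥0∞) : ℝ≥0∞ :=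
  if a = ⊤ then ⊤ else ENNReal.ofReal (Real.log a.toReal)

/-! ### The maximal ergodic inequality -/

/-- The running maximum `max_{0 ≤ k ≤ n} S_k h` of the Birkhoff sums of `h`, encoded through its
recursion `M_{n+1} = max (0, h + M_n ∘ T)`. -/
def garsiaMax {X : Type*} (T : X → X) (h : X → ℝ) : ℕ → X → ℝ
  | 0 => fun _ => 0
  | n + 1 => fun x => max 0 (h x + garsiaMax T h n (T x))

section
variable {X : Type*}

lemma garsiaMax_nonneg (T : X → X) (h : X → ℝ) : ∀ n x, 0 ≤ garsiaMax T h n x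
  | 0, _ => le_rfl
  | _ + 1, _ => le_max_left _ _

lemma garsiaMax_le_succ (T : X → X) (h : X → ℝ) :
    ∀ n x, garsiaMax T h n x ≤ garsiaMax T h (n + 1) x
  | 0, x => garsiaMax_nonneg T h 1 x
  | n + 1, x => max_le_max le_rfl (by gcongr; exact garsiaMax_le_succ T h n (T x))

lemma birkhoffSum_le_garsiaMax (T : X → X) (h : X → ℝ) :
    ∀ n x, birkhoffSum T h n x ≤ garsiaMax T h n x
  | 0, x => by simp [birkhoffSum_zero, garsiaMax]
  | n + 1, x => by
    rw [birkhoffSum_succ']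
    exact le_max_of_le_right (by gcongr; exact birkhoffSum_le_garsiaMax T h n (T x))

lemma birkhoffSum_sub_const (T : X → X) (h : X → ℝ) (c : ℝ) (n : ℕ) (x : X) :
    birkhoffSum T (fun x => h x - c) n x = birkhoffSum T h n x - n * c := by
  simp [birkhoffSum, Finset.sum_sub_distrib]

variable [MeasurableSpace X] {T : X → X} {μ : Measure X} {h : X → ℝ}

lemma measurable_garsiaMax (hT : Measurable T) (hm : Measurable h) :
    ∀ n, Measurable (garsiaMax T h n)
  | 0 => measurable_const
  | n + 1 => measurable_const.max (hm.add ((measurable_garsiaMax hT hm n).comp hT))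

lemma integrable_garsiaMax (hT : MeasurePreserving T μ μ) (hi : Integrable h μ) :
    ∀ n, Integrable (garsiaMax T h n) μ
  | 0 => integrable_zero _ _ _
  | n + 1 => (integrable_zero _ _ _).sup
      (hi.add (hT.integrable_comp_of_integrable (integrable_garsiaMax hT hi n)))

/-- Garsia's form of the maximal ergodic theorem: on `{M_n > 0}` one has
`h ≥ M_n - M_n ∘ T`, and the right-hand side has nonnegative integral over that set. -/
lemma garsia (hT : MeasurePreserving T μ μ) (hm : Measurable h) (hi : Integrable h μ) (n : ℕ) :
    0 ≤ ∫ x in {x | 0 < garsiaMax T h n x}, h x ∂μ := by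
  cases n with
  | zero => simp [garsiaMax]
  | succ n =>
    set M := garsiaMax T h (n + 1) with hM
    have hMi : Integrable M μ := integrable_garsiaMax hT hi _
    have hMm : Measurable M := measurable_garsiaMax hT.measurable hm _
    have hMTi : Integrable (fun x => M (T x)) μ := hT.integrable_comp_of_integrable hMi
    have hE : MeasurableSet {x | 0 < M x} := measurableSet_lt measurable_const hMm
    have h1 : ∫ x in {x | 0 < M x}, (M x - M (T x)) ∂μ ≤ ∫ x in {x | 0 < M x}, h x ∂μ := by
      refine setIntegral_mono_on (hMi.sub hMTi).integrableOn hi.integrableOn hE fun x hx => ?_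
      have h2 : M x = max 0 (h x + garsiaMax T h n (T x)) := rfl
      have h3 : M x = h x + garsiaMax T h n (T x) := by
        rcases max_choice 0 (h x + garsiaMax T h n (T x)) with h4 | h4
        · exact absurd (h2.trans h4) (ne_of_gt hx)
        · exact h2.trans h4
      have := garsiaMax_le_succ T h n (T x)
      simp only [← hM] at this
      linarith
    have h2 : ∫ x in {x | 0 < M x}, M x ∂μ = ∫ x, M x ∂μ :=
      setIntegral_eq_integral_of_forall_compl_eq_zero fun x hx =>
        le_antisymm (not_lt.mp hx) (garsiaMax_nonneg T h _ x)
    have h3 : ∫ x in {x | 0 < M x}, M (T x) ∂μ ≤ ∫ x, M (T x) ∂μ :=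
      setIntegral_le_integral hMTi (Eventually.of_forall fun x => garsiaMax_nonneg T h _ (T x))
    have h4 : ∫ x, M (T x) ∂μ = ∫ x, M x ∂μ := by
      have := integral_map (μ := μ) hT.measurable.aemeasurable (f := M)
        (by rw [hT.map_eq]; exact hMm.aestronglyMeasurable)
      rw [hT.map_eq] at this
      exact this.symm
    rw [integral_sub hMi.integrableOn hMTi.integrableOn] at h1
    linarith

/-- The weak-type bound for the ergodic maximal function of `h ≥ 0`, obtained from `garsia` applied
to `h - δ`. -/
lemma maximal_ineq [IsProbabilityMeasure μ] (hT : MeasurePreserving T μ μ) (hm : Measurable h)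
    (h0 : ∀ x, 0 ≤ h x) (hi : Integrable h μ) {δ : ℝ} (hδ : 0 < δ) :
    μ {x | ∃ n : ℕ, n * δ < birkhoffSum T h n x} ≤ ENNReal.ofReal ((∫ x, h x ∂μ) / δ) := by
  set k : X → ℝ := fun x => h x - δ
  have hkm : Measurable k := hm.sub_const δ
  have hki : Integrable k μ := hi.sub (integrable_const δ)
  have hsub : {x | ∃ n : ℕ, n * δ < birkhoffSum T h n x} ⊆ ⋃ n, {x | 0 < garsiaMax T k n x} := by
    rintro x ⟨n, hn⟩
    refine mem_iUnion.2 ⟨n, lt_of_lt_of_le ?_ (birkhoffSum_le_garsiaMax T k n x)⟩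
    rw [birkhoffSum_sub_const]
    linarith
  have hmono : Monotone fun n => {x | 0 < garsiaMax T k n x} :=
    monotone_nat_of_le_succ fun n x hx => lt_of_lt_of_le hx (garsiaMax_le_succ T k n x)
  refine (measure_mono hsub).trans ?_
  rw [hmono.measure_iUnion]
  refine iSup_le fun n => ?_
  set E := {x | 0 < garsiaMax T k n x}
  have h1 := garsia hT hkm hki n
  rw [integral_sub hi.integrableOn (integrable_const δ), setIntegral_const, smul_eq_mul] at h1
  have h2 : ∫ x in E, h x ∂μ ≤ ∫ x, h x ∂μ :=
    setIntegral_le_integral hi (Eventually.of_forall h0)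
  rw [← ofReal_measureReal (measure_ne_top μ E)]
  refine ENNReal.ofReal_le_ofReal ((le_div_iff₀ hδ).2 ?_)
  linarith

/-- If nonnegative functions `h N` have integrals tending to `0`, then at almost every point some
`h N` has all its Birkhoff averages below any prescribed `δ`. This replaces Birkhoff's pointwise
theorem throughout. -/
lemma ae_exists_birkhoffSum_le [IsProbabilityMeasure μ] (hT : MeasurePreserving T μ μ)
    {h : ℕ → X → ℝ} (hm : ∀ N, Measurable (h N)) (h0 : ∀ N x, 0 ≤ h N x)
    (hi : ∀ N, Integrable (h N) μ) (hlim : Tendsto (fun N => ∫ x, h N x ∂μ) atTop (𝓝 0)) :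
    ∀ᵐ x ∂μ, ∀ δ : ℝ, 0 < δ → ∃ N, ∀ n : ℕ, birkhoffSum T (h N) n x ≤ n * δ := by
  have key : ∀ δ : ℝ, 0 < δ → ∀ᵐ x ∂μ, ∃ N, ∀ n : ℕ, birkhoffSum T (h N) n x ≤ n * δ := by
    intro δ hδ
    rw [ae_iff]
    have hle : ∀ N, μ {x | ¬∃ N, ∀ n : ℕ, birkhoffSum T (h N) n x ≤ n * δ} ≤
        ENNReal.ofReal ((∫ x, h N x ∂μ) / δ) := fun N =>
      (measure_mono fun x hx => by
        simp only [mem_ofPred_eq, not_exists, not_forall, not_le] at hx ⊢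
        exact hx N).trans (maximal_ineq hT (hm N) (h0 N) (hi N) hδ)
    have hl : Tendsto (fun N => ENNReal.ofReal ((∫ x, h N x ∂μ) / δ)) atTop (𝓝 0) := by
      simpa using ENNReal.tendsto_ofReal (hlim.div_const δ)
    exact le_antisymm (ge_of_tendsto' hl hle) zero_le
  have h2 : ∀ᵐ x ∂μ, ∀ p : ℕ, ∃ N, ∀ n : ℕ, birkhoffSum T (h N) n x ≤ n * (1 / ((p : ℝ) + 1)) :=
    ae_all_iff.2 fun p => key _ (by positivity)
  filter_upwards [h2] with x hx δ hδ
  obtain ⟨p, hp⟩ := exists_nat_one_div_lt hδ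
  obtain ⟨N, hN⟩ := hx p
  exact ⟨N, fun n => (hN n).trans (by gcongr)⟩

/-- `h (T^n x) = o(n)` almost everywhere for integrable `h ≥ 0`: up to the constant `K`, the value
`h (T^n x)` is at most a Birkhoff sum of the truncation `(h - K)⁺`, whose integral is small. -/
lemma ae_orbit_sublinear [IsProbabilityMeasure μ] (hT : MeasurePreserving T μ μ)
    (hm : Measurable h) (h0 : ∀ x, 0 ≤ h x) (hi : Integrable h μ) :
    ∀ᵐ x ∂μ, ∀ δ : ℝ, 0 < δ → ∀ᶠ n : ℕ in atTop, h (T^[n] x) ≤ n * δ := by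
  have hlim : Tendsto (fun K : ℕ => ∫ x, max (h x - K) 0 ∂μ) atTop (𝓝 0) := by
    have := tendsto_integral_of_dominated_convergence (μ := μ) (F := fun (K : ℕ) x => max (h x - K) 0)
      (f := fun _ => 0) h (fun K => ((hm.sub_const _).max measurable_const).aestronglyMeasurable) hi
      (fun K => Eventually.of_forall fun x => by
        rw [Real.norm_of_nonneg (le_max_right _ _)]
        exact max_le (by linarith [(Nat.cast_nonneg K : (0 : ℝ) ≤ K)]) (h0 x))
      (Eventually.of_forall fun x => by
        obtain ⟨K₀, hK⟩ := exists_nat_ge (h x)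
        refine tendsto_const_nhds.congr' ?_
        filter_upwards [eventually_ge_atTop K₀] with K hK'
        have : (K₀ : ℝ) ≤ K := by exact_mod_cast hK'
        exact (max_eq_right (by linarith)).symm)
    simpa using this
  filter_upwards [ae_exists_birkhoffSum_le hT (h := fun (K : ℕ) x => max (h x - K) 0)
    (fun K => (hm.sub_const _).max measurable_const) (fun K x => le_max_right _ _)
    (fun K => (hi.sub (integrable_const _)).sup (integrable_zero _ _ _)) hlim] with x hx δ hδ
  obtain ⟨K, hK⟩ := hx (δ / 2) (by positivity)
  obtain ⟨n₀, hn₀⟩ := exists_nat_ge ((K + δ / 2) / (δ / 2))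
  filter_upwards [eventually_ge_atTop n₀] with n hn
  have h1 := hK (n + 1)
  rw [birkhoffSum_succ] at h1
  have h2 : 0 ≤ birkhoffSum T (fun x => max (h x - K) 0) n x :=
    Finset.sum_nonneg fun _ _ => le_max_right _ _
  have h3 := le_max_left (h (T^[n] x) - K) 0
  rw [div_le_iff₀ (by positivity)] at hn₀
  have h4 : (n₀ : ℝ) * (δ / 2) ≤ n * (δ / 2) := by gcongr
  push_cast at h1
  linarith

end

/-! ### A covering estimate for subadditive arrays -/

/-- The Katznelson–Weiss decomposition of the time interval `[k, e)`. Here `a k n` stands for the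
subadditive process over the `n` steps starting at time `k`. A time `k` is either good, so that a
block of length at most `N` starting there costs at most `c` per step, or it is jumped over in one
step at cost at most `b k`. A good block may overrun the endpoint `e`; the last sum pays for the
final stretch, of length less than `N`, one step at a time. -/
lemma covering {a : ℕ → ℕ → ℝ} (h0 : ∀ k n, 0 ≤ a k n) (hz : ∀ k, a k 0 = 0)
    (hsub : ∀ k n m, a k (n + m) ≤ a k n + a (k + n) m) {c : ℝ} (hc : 0 ≤ c) (N : ℕ) (b : ℕ → ℝ)
    (hb0 : ∀ k, 0 ≤ b k)
    (hb : ∀ k, a k 1 ≤ b k ∨ ∃ l, 1 ≤ l ∧ l ≤ N ∧ a k l ≤ l * c) (e : ℕ) :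
    ∀ n k, k + n = e → a k n ≤ n * c + ∑ j ∈ Finset.Ico k e, b j +
      ∑ j ∈ Finset.Ico (e - N) e, a j 1 := by
  have hR : 0 ≤ ∑ j ∈ Finset.Ico (e - N) e, a j 1 := Finset.sum_nonneg fun _ _ => h0 _ _
  have hone : ∀ n k, a k n ≤ ∑ j ∈ Finset.Ico k (k + n), a j 1 := by
    intro n
    induction n with
    | zero => intro k; simp [hz]
    | succ n ih =>
      intro k
      rw [← add_assoc, Finset.sum_Ico_succ_top (by omega)]
      exact (hsub k n 1).trans (by gcongr; exact ih k)
  intro n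
  induction n using Nat.strong_induction_on with
  | _ n ih =>
    intro k hk
    rcases Nat.eq_zero_or_pos n with rfl | hn
    · rw [hz]
      have := Finset.sum_nonneg (s := Finset.Ico k e) fun j _ => hb0 j
      simp only [Nat.cast_zero, zero_mul, zero_add]
      linarith
    rcases hb k with h1 | ⟨l, hl1, hlN, hl⟩
    · have h2 := ih (n - 1) (by omega) (k + 1) (by omega)
      have h3 := hsub k 1 (n - 1)
      rw [show 1 + (n - 1) = n by omega] at h3
      rw [Finset.sum_eq_sum_Ico_succ_bot (by omega)]
      have h4 : ((n - 1 : ℕ) : ℝ) * c ≤ n * c := by gcongr; omega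
      linarith
    · rcases le_or_gt l n with hln | hln
      · have h2 := ih (n - l) (by omega) (k + l) (by omega)
        have h3 := hsub k l (n - l)
        rw [show l + (n - l) = n by omega] at h3
        have h4 : ∑ j ∈ Finset.Ico (k + l) e, b j ≤ ∑ j ∈ Finset.Ico k e, b j :=
          Finset.sum_le_sum_of_subset_of_nonneg (Finset.Ico_subset_Ico (by omega) le_rfl)
            fun j _ _ => hb0 j
        rw [Nat.cast_sub hln, sub_mul] at h2
        linarith
      · have h2 := hone n k
        rw [hk] at h2
        have h3 : ∑ j ∈ Finset.Ico k e, a j 1 ≤ ∑ j ∈ Finset.Ico (e - N) e, a j 1 :=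
          Finset.sum_le_sum_of_subset_of_nonneg (Finset.Ico_subset_Ico (by omega) le_rfl)
            fun j _ _ => h0 j 1
        have h4 := Finset.sum_nonneg (s := Finset.Ico k e) fun j _ => hb0 j
        have h5 : 0 ≤ (n : ℝ) * c := by positivity
        linarith

/-! ### Kingman's theorem for nonnegative subadditive processes -/

namespace IsSubadditiveCocycle
variable {X : Type*}

/-- The lower limit of `f n x / n` for a process `f`, taken in
`[0, ∞]` so that it needs no boundedness. -/
noncomputable def lowerLim (f : ℕ → X → ℝ) (x : X) : ℝ≥0∞ :=
  liminf (fun n : ℕ => ENNReal.ofReal (f n x / n)) atTop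

/-- The real-valued limit function of the process: its lower limit, with value `0` at points
where that is infinite. -/
noncomputable def lim (f : ℕ → X → ℝ) (x : X) : ℝ := (lowerLim f x).toReal

lemma lim_nonneg (f : ℕ → X → ℝ) (x : X) : 0 ≤ lim f x := ENNReal.toReal_nonneg

end IsSubadditiveCocycle

section
variable {X : Type*} [MeasurableSpace X] {T : X → X} {μ : Measure X}

lemma ae_comp_iterate (hT : MeasurePreserving T μ μ) {p : X → Prop} (hp : ∀ᵐ x ∂μ, p x) :
    ∀ᵐ x ∂μ, ∀ k, p (T^[k] x) :=
  ae_all_iff.2 fun k => (hT.iterate k).quasiMeasurePreserving.ae hp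

lemma integral_comp_iterate (hT : MeasurePreserving T μ μ) {h : X → ℝ} (hm : Measurable h)
    (k : ℕ) : ∫ x, h (T^[k] x) ∂μ = ∫ x, h x ∂μ := by
  have := integral_map (μ := μ) (hT.iterate k).measurable.aemeasurable (f := h)
    (by rw [(hT.iterate k).map_eq]; exact hm.aestronglyMeasurable)
  rw [(hT.iterate k).map_eq] at this
  exact this.symm

lemma integrable_comp_iterate (hT : MeasurePreserving T μ μ) {h : X → ℝ} (hi : Integrable h μ)
    (k : ℕ) : Integrable (fun x => h (T^[k] x)) μ :=
  (hT.iterate k).integrable_comp_of_integrable hi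

/-- A function of finite integral that does not decrease along orbits is invariant. -/
lemma ae_eq_comp_of_ae_le_comp (hT : MeasurePreserving T μ μ) {G : X → ℝ≥0∞} (hG : Measurable G)
    (hfin : ∫⁻ x, G x ∂μ ≠ ⊤) (hle : ∀ᵐ x ∂μ, G x ≤ G (T x)) : ∀ᵐ x ∂μ, G (T x) = G x := by
  have := ae_eq_of_ae_le_of_lintegral_le (μ := μ) (f := G) (g := fun x => G (T x)) hle hfin
    (hG.comp hT.measurable).aemeasurable (hT.lintegral_comp hG).le
  filter_upwards [this] with x hx using hx.symm

/-- A nonnegative subadditive process over `T`. Subadditivity is only required almost everywhere,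
since passing from `[0, ∞]` to `ℝ` by `ENNReal.toReal` may destroy it where a value is infinite. -/
structure IsSubadditiveCocycle (T : X → X) (μ : Measure X) (f : ℕ → X → ℝ) : Prop where
  measurable : ∀ n, Measurable (f n)
  nonneg : ∀ n x, 0 ≤ f n x
  zero : ∀ x, f 0 x = 0
  subadd : ∀ᵐ x ∂μ, ∀ n m, f (n + m) x ≤ f n x + f m (T^[n] x)
  integrable_one : Integrable (f 1) μ

namespace IsSubadditiveCocycle
variable {f : ℕ → X → ℝ}

lemma le_birkhoffSum (hf : IsSubadditiveCocycle T μ f) :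
    ∀ᵐ x ∂μ, ∀ n, f n x ≤ birkhoffSum T (f 1) n x := by
  filter_upwards [hf.subadd] with x hx n
  induction n with
  | zero => simp [hf.zero, birkhoffSum_zero]
  | succ n ih =>
    rw [birkhoffSum_succ]
    exact (hx n 1).trans (by gcongr)

lemma integrable (hT : MeasurePreserving T μ μ) (hf : IsSubadditiveCocycle T μ f) (n : ℕ) :
    Integrable (f n) μ := by
  refine Integrable.mono' (g := birkhoffSum T (f 1) n) ?_ (hf.measurable n).aestronglyMeasurable ?_
  · exact integrable_finsetSum _ fun k _ => integrable_comp_iterate hT hf.integrable_one k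
  · filter_upwards [hf.le_birkhoffSum] with x hx
    rw [Real.norm_of_nonneg (hf.nonneg n x)]
    exact hx n

lemma integral_add_le (hT : MeasurePreserving T μ μ) (hf : IsSubadditiveCocycle T μ f) (n m : ℕ) :
    ∫ x, f (n + m) x ∂μ ≤ ∫ x, f n x ∂μ + ∫ x, f m x ∂μ := by
  rw [← integral_comp_iterate hT (hf.measurable m) n, ← integral_add (hf.integrable hT n)
    (integrable_comp_iterate hT (hf.integrable hT m) n)]
  refine integral_mono_ae (hf.integrable hT _) ((hf.integrable hT n).add
    (integrable_comp_iterate hT (hf.integrable hT m) n)) ?_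
  filter_upwards [hf.subadd] with x hx using hx n m

lemma integral_mul_le (hT : MeasurePreserving T μ μ) (hf : IsSubadditiveCocycle T μ f) (n k : ℕ) :
    ∫ x, f (n * k) x ∂μ ≤ k * ∫ x, f n x ∂μ := by
  induction k with
  | zero => simp [hf.zero]
  | succ k ih =>
    rw [Nat.mul_succ]
    push_cast
    linarith [hf.integral_add_le hT (n * k) n]

lemma measurable_lowerLim (hf : IsSubadditiveCocycle T μ f) : Measurable (lowerLim f) :=
  Measurable.liminf fun n => ((hf.measurable n).div_const _).ennreal_ofReal

/-- By Fatou's lemma and `∫ f n ≤ n ∫ f 1`. -/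
lemma lintegral_lowerLim_lt_top (hT : MeasurePreserving T μ μ) (hf : IsSubadditiveCocycle T μ f) :
    ∫⁻ x, lowerLim f x ∂μ < ⊤ := by
  refine (lintegral_liminf_le fun n =>
    ((hf.measurable n).div_const _).ennreal_ofReal).trans_lt ?_
  refine lt_of_le_of_lt ?_ (ENNReal.ofReal_lt_top (r := ∫ x, f 1 x ∂μ))
  refine liminf_le_of_frequently_le' (Eventually.frequently ?_)
  filter_upwards [eventually_gt_atTop 0] with n hn
  have hn' : (0 : ℝ) < n := by exact_mod_cast hn
  rw [← ofReal_integral_eq_lintegral_ofReal ((hf.integrable hT n).div_const _)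
    (Eventually.of_forall fun x => div_nonneg (hf.nonneg n x) hn'.le), integral_div]
  refine ENNReal.ofReal_le_ofReal ((div_le_iff₀ hn').2 ?_)
  have := hf.integral_mul_le hT 1 n
  rw [one_mul] at this
  linarith

lemma lowerLim_le_comp (hf : IsSubadditiveCocycle T μ f) :
    ∀ᵐ x ∂μ, lowerLim f x ≤ lowerLim f (T x) := by
  filter_upwards [hf.subadd] with x hx
  have h0 : Tendsto (fun n : ℕ => ENNReal.ofReal (f 1 x / ((n : ℝ) + 1))) atTop (𝓝 0) := by
    have h1 : Tendsto (fun n : ℕ => f 1 x / ((n : ℝ) + 1)) atTop (𝓝 0) :=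
      tendsto_const_nhds.div_atTop
        (tendsto_atTop_add_const_right _ _ tendsto_natCast_atTop_atTop)
    simpa using ENNReal.tendsto_ofReal h1
  unfold lowerLim
  rw [← liminf_nat_add _ 1, ← ENNReal.liminf_add_of_right_tendsto_zero h0
    (fun n : ℕ => ENNReal.ofReal (f n (T x) / n))]
  refine liminf_le_liminf ?_
  filter_upwards [eventually_gt_atTop 0] with n hn
  have hn' : (0 : ℝ) < n := by exact_mod_cast hn
  simp only [Pi.add_apply]
  rw [← ENNReal.ofReal_add (div_nonneg (hf.nonneg n _) hn'.le)
    (div_nonneg (hf.nonneg 1 x) (by positivity))]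
  refine ENNReal.ofReal_le_ofReal ?_
  have h2 := hx 1 n
  rw [add_comm 1 n, Function.iterate_one] at h2
  push_cast
  calc f (n + 1) x / ((n : ℝ) + 1) ≤ (f 1 x + f n (T x)) / ((n : ℝ) + 1) := by gcongr
    _ = f n (T x) / ((n : ℝ) + 1) + f 1 x / ((n : ℝ) + 1) := by ring
    _ ≤ f n (T x) / n + f 1 x / ((n : ℝ) + 1) := by
        have := hf.nonneg n (T x)
        gcongr
        linarith

lemma measurable_lim (hf : IsSubadditiveCocycle T μ f) : Measurable (lim f) :=
  hf.measurable_lowerLim.ennreal_toReal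

lemma integrable_lim (hT : MeasurePreserving T μ μ) (hf : IsSubadditiveCocycle T μ f) :
    Integrable (lim f) μ :=
  integrable_toReal_of_lintegral_ne_top hf.measurable_lowerLim.aemeasurable
    (hf.lintegral_lowerLim_lt_top hT).ne

lemma lowerLim_lt_top (hT : MeasurePreserving T μ μ) (hf : IsSubadditiveCocycle T μ f) :
    ∀ᵐ x ∂μ, lowerLim f x < ⊤ :=
  ae_lt_top hf.measurable_lowerLim (hf.lintegral_lowerLim_lt_top hT).ne

lemma lim_iterate (hT : MeasurePreserving T μ μ) (hf : IsSubadditiveCocycle T μ f) :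
    ∀ᵐ x ∂μ, ∀ k, lim f (T^[k] x) = lim f x := by
  filter_upwards [ae_comp_iterate hT (ae_eq_comp_of_ae_le_comp hT hf.measurable_lowerLim
    (hf.lintegral_lowerLim_lt_top hT).ne hf.lowerLim_le_comp)] with x hx k
  induction k with
  | zero => rfl
  | succ k ih =>
    rw [← ih, Function.iterate_succ_apply']
    exact congrArg ENNReal.toReal (hx k)

/-- The points from which no time `l ≤ N` realizes the lower limit up to `ε`. -/
def bad (f : ℕ → X → ℝ) (ε : ℝ) (N : ℕ) : Set X :=
  {x | ∀ l : ℕ, 1 ≤ l → l ≤ N → l * (lim f x + ε) < f l x}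

lemma measurableSet_bad (hf : IsSubadditiveCocycle T μ f) (ε : ℝ) (N : ℕ) :
    MeasurableSet (bad f ε N) := by
  simp only [bad, ofPred_forall]
  exact MeasurableSet.iInter fun l => MeasurableSet.iInter fun _ => MeasurableSet.iInter fun _ =>
    measurableSet_lt ((hf.measurable_lim.add_const ε).const_mul _) (hf.measurable l)

lemma eventually_notMem_bad (hT : MeasurePreserving T μ μ) (hf : IsSubadditiveCocycle T μ f)
    {ε : ℝ} (hε : 0 < ε) : ∀ᵐ x ∂μ, ∀ᶠ N in atTop, x ∉ bad f ε N := by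
  filter_upwards [hf.lowerLim_lt_top hT] with x hx
  have h1 : lowerLim f x < ENNReal.ofReal (lim f x + ε) := by
    rw [← ENNReal.ofReal_toReal hx.ne]
    exact (ENNReal.ofReal_lt_ofReal_iff (by have := lim_nonneg f x; linarith)).2
      (by simp only [lim]; linarith)
  have h2 := (frequently_lt_of_liminf_lt (by isBoundedDefault) h1).and_eventually
    (eventually_ge_atTop 1)
  obtain ⟨l, hl, hl1⟩ := h2.exists
  filter_upwards [eventually_ge_atTop l] with N hN hb
  have h3 := hb l hl1 hN
  have hl' : (0 : ℝ) < l := by exact_mod_cast hl1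
  rw [ENNReal.ofReal_lt_ofReal_iff (by have := lim_nonneg f x; linarith), div_lt_iff₀ hl'] at hl
  linarith

/-- The cost `f 1` of a single step, charged only at bad points. -/
noncomputable def excess (f : ℕ → X → ℝ) (ε : ℝ) (N : ℕ) : X → ℝ :=
  (bad f ε N).indicator (f 1)

lemma measurable_excess (hf : IsSubadditiveCocycle T μ f) (ε : ℝ) (N : ℕ) :
    Measurable (excess f ε N) :=
  (hf.measurable 1).indicator (hf.measurableSet_bad ε N)

lemma excess_nonneg (hf : IsSubadditiveCocycle T μ f) (ε : ℝ) (N : ℕ) (x : X) :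
    0 ≤ excess f ε N x :=
  indicator_nonneg (fun x _ => hf.nonneg 1 x) x

lemma integrable_excess (hf : IsSubadditiveCocycle T μ f) (ε : ℝ) (N : ℕ) :
    Integrable (excess f ε N) μ :=
  hf.integrable_one.indicator (hf.measurableSet_bad ε N)

lemma tendsto_integral_excess (hT : MeasurePreserving T μ μ) (hf : IsSubadditiveCocycle T μ f)
    {ε : ℝ} (hε : 0 < ε) : Tendsto (fun N => ∫ x, excess f ε N x ∂μ) atTop (𝓝 0) := by
  have := tendsto_integral_of_dominated_convergence (μ := μ) (F := excess f ε)
    (f := fun _ => 0) (f 1) (fun N => (hf.measurable_excess ε N).aestronglyMeasurable)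
    hf.integrable_one
    (fun N => Eventually.of_forall fun x => by
      rw [Real.norm_of_nonneg (hf.excess_nonneg ε N x)]
      exact indicator_le_self' (fun _ _ => hf.nonneg 1 _) x)
    (by
      filter_upwards [hf.eventually_notMem_bad hT hε] with x hx
      refine tendsto_const_nhds.congr' ?_
      filter_upwards [hx] with N hN
      exact (indicator_of_notMem hN _).symm)
  simpa using this

/-- The covering estimate along almost every orbit; invariance of `lim f` makes the cost per step
of a good block constant along the orbit. -/
lemma le_decomposition (hT : MeasurePreserving T μ μ) (hf : IsSubadditiveCocycle T μ f)
    {ε : ℝ} (hε : 0 < ε) : ∀ᵐ x ∂μ, ∀ N n, f n x ≤ n * (lim f x + ε) +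
      birkhoffSum T (excess f ε N) n x + ∑ j ∈ Finset.Ico (n - N) n, f 1 (T^[j] x) := by
  filter_upwards [ae_comp_iterate hT hf.subadd, hf.lim_iterate hT] with x hx hlim N n
  have := covering (a := fun k n => f n (T^[k] x)) (fun k n => hf.nonneg n _) (fun k => hf.zero _)
    (fun k n m => by
      have := hx k n m
      rwa [← Function.iterate_add_apply, add_comm n k] at this)
    (c := lim f x + ε) (by have := lim_nonneg f x; linarith) N
    (fun j => excess f ε N (T^[j] x)) (fun j => hf.excess_nonneg ε N _)
    (fun k => by
      by_cases hk : T^[k] x ∈ bad f ε N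
      · exact Or.inl (indicator_of_mem hk (f 1)).ge
      · right
        simp only [bad, mem_ofPred_eq, not_forall, not_lt] at hk
        obtain ⟨l, h1, h2, h3⟩ := hk
        rw [hlim k] at h3
        exact ⟨l, h1, h2, h3⟩) n n 0 (zero_add n)
  simpa only [birkhoffSum, Finset.range_eq_Ico, Function.iterate_zero_apply] using this

lemma eventually_le [IsProbabilityMeasure μ] (hT : MeasurePreserving T μ μ)
    (hf : IsSubadditiveCocycle T μ f) {ε : ℝ} (hε : 0 < ε) :
    ∀ᵐ x ∂μ, ∀ᶠ n : ℕ in atTop, f n x ≤ n * (lim f x + 3 * ε) := by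
  filter_upwards [hf.le_decomposition hT hε, ae_exists_birkhoffSum_le hT (hf.measurable_excess ε)
    (hf.excess_nonneg ε) (hf.integrable_excess ε) (hf.tendsto_integral_excess hT hε),
    ae_orbit_sublinear hT (hf.measurable 1) (hf.nonneg 1) hf.integrable_one] with x h1 h2 h3
  obtain ⟨N, hN⟩ := h2 ε hε
  -- Each of the at most `N` terms of the tail is below `n * ε / (N + 1)`.
  obtain ⟨J, hJ⟩ := eventually_atTop.1 (h3 (ε / (N + 1)) (by positivity))
  filter_upwards [eventually_ge_atTop (J + N)] with n hn
  have h4 : ∑ j ∈ Finset.Ico (n - N) n, f 1 (T^[j] x) ≤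
      ∑ _j ∈ Finset.Ico (n - N) n, n * (ε / (N + 1)) :=
    Finset.sum_le_sum fun j hj => by
      rw [Finset.mem_Ico] at hj
      refine (hJ j (by omega)).trans ?_
      have : (j : ℝ) ≤ n := by exact_mod_cast hj.2.le
      gcongr
  rw [Finset.sum_const, Nat.card_Ico, show n - (n - N) = N by omega, nsmul_eq_mul] at h4
  have h5 : (N : ℝ) * (n * (ε / (N + 1))) ≤ n * ε := by
    rw [show (N : ℝ) * (n * (ε / (N + 1))) = (N / (N + 1)) * (n * ε) by ring]
    refine mul_le_of_le_one_left (by positivity) ?_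
    rw [div_le_one (by positivity)]
    linarith
  have := h1 N n
  have := hN n
  linarith

theorem tendsto_ae [IsProbabilityMeasure μ] (hT : MeasurePreserving T μ μ)
    (hf : IsSubadditiveCocycle T μ f) :
    ∀ᵐ x ∂μ, Tendsto (fun n : ℕ => f n x / n) atTop (𝓝 (lim f x)) := by
  have h1 : ∀ᵐ x ∂μ, ∀ p : ℕ, ∀ᶠ n : ℕ in atTop,
      f n x ≤ n * (lim f x + 3 * (1 / ((p : ℝ) + 1))) :=
    ae_all_iff.2 fun p => hf.eventually_le hT (by positivity)
  filter_upwards [h1, hf.lowerLim_lt_top hT] with x hx hfin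
  rw [tendsto_order]
  constructor
  · intro a ha
    rcases lt_or_ge a 0 with h0 | h0
    · filter_upwards with n using h0.trans_le (div_nonneg (hf.nonneg n x) n.cast_nonneg)
    · have h2 : ENNReal.ofReal a < lowerLim f x := (ENNReal.ofReal_lt_iff_lt_toReal h0 hfin.ne).2 ha
      filter_upwards [eventually_lt_of_lt_liminf h2 (by isBoundedDefault)] with n hn
      exact lt_of_not_ge fun h => absurd (ENNReal.ofReal_le_ofReal h) (not_le.2 hn)
  · intro a ha
    obtain ⟨p, hp⟩ := exists_nat_one_div_lt (show 0 < (a - lim f x) / 3 by linarith)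
    filter_upwards [hx p, eventually_gt_atTop 0] with n hn hn0
    have hn' : (0 : ℝ) < n := by exact_mod_cast hn0
    rw [div_lt_iff₀ hn']
    refine hn.trans_lt ?_
    rw [mul_comm a]
    gcongr
    linarith

/-- The integrated form of `le_decomposition`. -/
lemma integral_le [IsProbabilityMeasure μ] (hT : MeasurePreserving T μ μ)
    (hf : IsSubadditiveCocycle T μ f) {ε : ℝ} (hε : 0 < ε) (N n : ℕ) :
    ∫ x, f n x ∂μ ≤ n * (∫ x, lim f x ∂μ + ε) + n * ∫ x, excess f ε N x ∂μ +
      N * ∫ x, f 1 x ∂μ := by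
  have i1 : Integrable (fun x => n * (lim f x + ε)) μ :=
    ((hf.integrable_lim hT).add (integrable_const ε)).const_mul _
  have i2 : Integrable (fun x => birkhoffSum T (excess f ε N) n x) μ :=
    integrable_finsetSum _ fun k _ => integrable_comp_iterate hT (hf.integrable_excess ε N) k
  have i3 : Integrable (fun x => ∑ j ∈ Finset.Ico (n - N) n, f 1 (T^[j] x)) μ :=
    integrable_finsetSum _ fun k _ => integrable_comp_iterate hT hf.integrable_one k
  have h1 : ∫ x, f n x ∂μ ≤ ∫ x, (n * (lim f x + ε) +
      birkhoffSum T (excess f ε N) n x + ∑ j ∈ Finset.Ico (n - N) n, f 1 (T^[j] x)) ∂μ := by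
    refine integral_mono_ae (hf.integrable hT n) ((i1.add i2).add i3) ?_
    filter_upwards [hf.le_decomposition hT hε] with x hx using hx N n
  have i12 : Integrable (fun x => n * (lim f x + ε) + birkhoffSum T (excess f ε N) n x) μ :=
    i1.add i2
  rw [integral_add i12 i3, integral_add i1 i2, integral_const_mul,
    integral_add (hf.integrable_lim hT) (integrable_const ε), integral_const,
    integral_finsetSum _ fun k _ => integrable_comp_iterate hT hf.integrable_one k] at h1
  have h2 : ∫ x, birkhoffSum T (excess f ε N) n x ∂μ = n * ∫ x, excess f ε N x ∂μ := by
    simp only [birkhoffSum]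
    rw [integral_finsetSum _ fun k _ => integrable_comp_iterate hT (hf.integrable_excess ε N) k]
    simp [integral_comp_iterate hT (hf.measurable_excess ε N)]
  have h3 : ∑ j ∈ Finset.Ico (n - N) n, ∫ x, f 1 (T^[j] x) ∂μ ≤ N * ∫ x, f 1 x ∂μ := by
    simp only [integral_comp_iterate hT (hf.measurable 1), Finset.sum_const, Nat.card_Ico,
      nsmul_eq_mul]
    have : 0 ≤ ∫ x, f 1 x ∂μ := integral_nonneg fun x => hf.nonneg 1 x
    gcongr
    omega
  simp only [probReal_univ, one_smul] at h1
  linarith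

/-- Convergence in `L¹`, without uniform integrability of Birkhoff averages: the negative part of
`f n / n - lim f` is dominated by `lim f`, and the integral of `f n / n - lim f` is asymptotically
at most any positive number by `integral_le`. -/
theorem tendsto_L1 [IsProbabilityMeasure μ] (hT : MeasurePreserving T μ μ)
    (hf : IsSubadditiveCocycle T μ f) :
    Tendsto (fun n : ℕ => ∫ x, |f n x / n - lim f x| ∂μ) atTop (𝓝 0) := by
  have hneg : Tendsto (fun n : ℕ => ∫ x, max (lim f x - f n x / n) 0 ∂μ) atTop (𝓝 0) := by
    have := tendsto_integral_of_dominated_convergence (μ := μ)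
      (F := fun (n : ℕ) x => max (lim f x - f n x / n) 0) (f := fun _ => 0) (lim f)
      (fun n => ((hf.measurable_lim.sub ((hf.measurable n).div_const _)).max
        measurable_const).aestronglyMeasurable)
      (hf.integrable_lim hT)
      (fun n => Eventually.of_forall fun x => by
        rw [Real.norm_of_nonneg (le_max_right _ _)]
        exact max_le (by linarith [div_nonneg (hf.nonneg n x) (n.cast_nonneg (α := ℝ))])
          (lim_nonneg f x))
      (by
        filter_upwards [hf.tendsto_ae hT] with x hx
        have := (hx.const_sub (lim f x)).max (tendsto_const_nhds (x := (0 : ℝ)))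
        simpa using this)
    simpa using this
  have hif : ∀ n : ℕ, Integrable (fun x => f n x / n) μ := fun n => (hf.integrable hT n).div_const _
  have hig := hf.integrable_lim hT
  have habs : ∀ n : ℕ, ∫ x, |f n x / n - lim f x| ∂μ =
      2 * ∫ x, max (lim f x - f n x / n) 0 ∂μ + ((∫ x, f n x ∂μ) / n - ∫ x, lim f x ∂μ) := by
    intro n
    -- `|u| = 2 u⁻ + u` with `u = f n / n - lim f`.
    have i1 : Integrable (fun x => 2 * max (lim f x - f n x / n) 0) μ :=
      ((hig.sub (hif n)).sup (integrable_zero _ _ _)).const_mul 2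
    have i2 : Integrable (fun x => f n x / n - lim f x) μ := (hif n).sub hig
    rw [← integral_div, ← integral_sub (hif n) hig, ← integral_const_mul, ← integral_add i1 i2]
    refine integral_congr_ae (Eventually.of_forall fun x => ?_)
    simp only
    rcases le_total (f n x / n) (lim f x) with h | h
    · rw [abs_of_nonpos (by linarith), max_eq_left (by linarith)]; ring
    · rw [abs_of_nonneg (by linarith), max_eq_right (by linarith)]; ring
  rw [tendsto_order]
  refine ⟨fun a ha => Eventually.of_forall fun n =>
    ha.trans_le (integral_nonneg fun x => abs_nonneg _), fun δ hδ => ?_⟩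
  have hε : 0 < δ / 5 := by positivity
  obtain ⟨N, hN⟩ := ((tendsto_order.1 (hf.tendsto_integral_excess hT hε)).2 _ hε).exists
  have hdiv : Tendsto (fun n : ℕ => (N * ∫ x, f 1 x ∂μ) / (n : ℝ)) atTop (𝓝 0) :=
    tendsto_const_nhds.div_atTop tendsto_natCast_atTop_atTop
  filter_upwards [(tendsto_order.1 hneg).2 _ hε, (tendsto_order.1 hdiv).2 _ hε,
    eventually_gt_atTop 0] with n h1 h2 hn
  have hn' : (0 : ℝ) < n := by exact_mod_cast hn
  have h3 : (∫ x, f n x ∂μ) / n ≤ (∫ x, lim f x ∂μ + δ / 5) + ∫ x, excess f (δ / 5) N x ∂μ +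
      (N * ∫ x, f 1 x ∂μ) / (n : ℝ) := by
    rw [div_le_iff₀ hn', add_mul _ _ (n : ℝ), div_mul_cancel₀ _ hn'.ne']
    linarith [hf.integral_le hT hε N n]
  rw [habs]
  linarith

theorem tendsto_integral [IsProbabilityMeasure μ] (hT : MeasurePreserving T μ μ)
    (hf : IsSubadditiveCocycle T μ f) :
    Tendsto (fun n : ℕ => (∫ x, f n x ∂μ) / n) atTop (𝓝 (∫ x, lim f x ∂μ)) := by
  refine tendsto_iff_norm_sub_tendsto_zero.2 (squeeze_zero (fun _ => norm_nonneg _) (fun n => ?_)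
    (hf.tendsto_L1 hT))
  rw [← integral_div, ← integral_sub ((hf.integrable hT n).div_const _) (hf.integrable_lim hT)]
  exact norm_integral_le_integral_norm _

/-- Together with `tendsto_integral` this says `∫ lim f = inf_n (∫ f n) / n`. -/
theorem integral_lim_le [IsProbabilityMeasure μ] (hT : MeasurePreserving T μ μ)
    (hf : IsSubadditiveCocycle T μ f) {n : ℕ} (hn : 0 < n) :
    ∫ x, lim f x ∂μ ≤ (∫ x, f n x ∂μ) / n := by
  have hs : Tendsto (fun k : ℕ => n * k) atTop atTop :=
    tendsto_id.const_mul_atTop' hn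
  refine le_of_tendsto ((hf.tendsto_integral hT).comp hs) ?_
  filter_upwards [eventually_gt_atTop 0] with k hk
  have hn' : (0 : ℝ) < n := by exact_mod_cast hn
  have hk' : (0 : ℝ) < k := by exact_mod_cast hk
  simp only [Function.comp_apply]
  push_cast
  rw [div_le_div_iff₀ (by positivity) hn']
  have := hf.integral_mul_le hT n k
  nlinarith

end IsSubadditiveCocycle
end

/-! ### The function `log⁺` on `[0, ∞]` -/

section LogPlus

lemma logPlus_eq (a : ℝ≥0∞) : logPlus a = (ENNReal.log a).toENNReal := by
  unfold logPlus
  split_ifs with h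
  · simp [h]
  · rcases eq_or_ne a 0 with rfl | h0
    · simp
    · rw [ENNReal.log_pos_real h0 h]
      simp

lemma continuous_logPlus : Continuous logPlus := by
  rw [show logPlus = fun a => (ENNReal.log a).toENNReal from funext logPlus_eq]
  exact ENNReal.continuous_log.ereal_toENNReal

lemma logPlus_mono : Monotone logPlus := fun a b h => by
  rw [logPlus_eq, logPlus_eq]
  exact EReal.toENNReal_le_toENNReal (ENNReal.log_monotone h)

lemma logPlus_of_le_one {a : ℝ≥0∞} (h : a ≤ 1) : logPlus a = 0 := by
  rw [logPlus_eq]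
  exact EReal.toENNReal_of_nonpos (ENNReal.log_le_zero_iff.2 h)

lemma logPlus_mul_le (a b : ℝ≥0∞) : logPlus (a * b) ≤ logPlus a + logPlus b := by
  rw [logPlus_eq, logPlus_eq, logPlus_eq, ENNReal.log_mul_add]
  exact EReal.toENNReal_add_le

end LogPlus

/-! ### Local Lipschitz constants on Bowen balls -/

section Bowen
variable {X : Type*} [MetricSpace X] {T : X → X}

lemma lipBowen_mono (n : ℕ) (x : X) : Monotone fun s => lipBowen T n s x := fun s t h => by
  refine biSup_mono fun y hy => ⟨fun k hk => (hy.1 k hk).trans_le h, hy.2⟩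

lemma lipBowen_zero_le (s : ℝ) (x : X) : lipBowen T 0 s x ≤ 1 := by
  refine iSup₂_le fun y _ => ?_
  simpa using div_self_le_one (dist x y)

/-- The chain rule: a point of the Bowen ball of step `n + m` lies in the one of step `n`, and its
`n`-th iterate lies in the Bowen ball of step `m` at `T^n x`. Injectivity keeps the two iterates
distinct. -/
lemma lipBowen_add_le (hinj : Function.Injective T) (n m : ℕ) (s : ℝ) (x : X) :
    lipBowen T (n + m) s x ≤ lipBowen T n s x * lipBowen T m s (T^[n] x) := by
  refine iSup₂_le fun y hy => ?_
  have hne : y ≠ x := hy.2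
  have hne' : T^[n] y ≠ T^[n] x := (hinj.iterate n).ne hne
  have hd : 0 < dist (T^[n] x) (T^[n] y) := dist_pos.2 hne'.symm
  have h1 : ENNReal.ofReal (dist (T^[n] x) (T^[n] y) / dist x y) ≤ lipBowen T n s x :=
    le_iSup₂_of_le y ⟨fun k hk => hy.1 k (by omega), hne⟩ le_rfl
  have h2 : ENNReal.ofReal (dist (T^[m] (T^[n] x)) (T^[m] (T^[n] y)) /
      dist (T^[n] x) (T^[n] y)) ≤ lipBowen T m s (T^[n] x) := by
    refine le_iSup₂_of_le (T^[n] y) ⟨fun k hk => ?_, hne'⟩ le_rfl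
    rw [← Function.iterate_add_apply, ← Function.iterate_add_apply]
    exact hy.1 (k + n) (by omega)
  refine le_trans (le_of_eq ?_) (mul_le_mul' h1 h2)
  rw [← ENNReal.ofReal_mul (by positivity), ← Function.iterate_add_apply,
    ← Function.iterate_add_apply, add_comm m n]
  congr 1
  field_simp

/-- For fixed `y`, the set of `x` having `y` in their punctured Bowen ball is open, and the
difference quotient is continuous there; the supremum over `y` is lower semicontinuous. This is
where measurability of `lipBowen` comes from. -/
lemma lowerSemicontinuous_lipBowen (hT : Continuous T) (n : ℕ) (s : ℝ) :
    LowerSemicontinuous (lipBowen T n s) := by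
  refine lowerSemicontinuous_iSup fun y => lowerSemicontinuous_iff_isOpen_preimage.2 fun a => ?_
  have hU : IsOpen {x | y ∈ bowenBall T n x s \ {x}} := by
    have : {x | y ∈ bowenBall T n x s \ {x}} =
        (⋂ k ∈ Finset.range n, {x | dist (T^[k] x) (T^[k] y) < s}) ∩ {x | x ≠ y} := by
      ext x
      simp [bowenBall, eq_comm]
    rw [this]
    exact (isOpen_biInter_finset fun k _ =>
      isOpen_lt ((hT.iterate k).dist continuous_const) continuous_const).inter isOpen_ne
  have hc : ContinuousOn (fun x => ENNReal.ofReal (dist (T^[n] x) (T^[n] y) / dist x y))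
      {x | y ∈ bowenBall T n x s \ {x}} := by
    refine ENNReal.continuous_ofReal.comp_continuousOn (ContinuousOn.div
      ((hT.iterate n).dist continuous_const).continuousOn
      (continuous_id.dist continuous_const).continuousOn fun x hx => ?_)
    exact dist_ne_zero.2 (Ne.symm hx.2)
  convert hc.isOpen_inter_preimage hU (isOpen_Ioi (a := a)) using 1
  ext x
  simp only [mem_preimage, mem_Ioi, lt_iSup_iff, mem_inter_iff, mem_ofPred_eq, exists_prop]

lemma tendsto_lipBowen {t : ℕ → ℝ} (hpos : ∀ k, 0 < t k) (ht : Tendsto t atTop (𝓝 0))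
    (n : ℕ) (x : X) :
    Tendsto (fun k => lipBowen T n (t k) x) atTop (𝓝 (pointwiseLip T n x)) := by
  rw [tendsto_order]
  refine ⟨fun a ha => Eventually.of_forall fun k => ha.trans_le (iInf₂_le (t k) (hpos k)),
    fun a ha => ?_⟩
  simp only [pointwiseLip, iInf_lt_iff] at ha
  obtain ⟨s, hs, h⟩ := ha
  filter_upwards [(tendsto_order.1 ht).2 s hs] with k hk
  exact (lipBowen_mono n x hk.le).trans_lt h

lemma pointwiseLip_le (n : ℕ) {s : ℝ} (hs : 0 < s) (x : X) :
    pointwiseLip T n x ≤ lipBowen T n s x :=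
  iInf₂_le s hs

lemma tendsto_one_div_scale {r : ℝ} :
    Tendsto (fun k : ℕ => r / ((k : ℝ) + 1)) atTop (𝓝 0) :=
  tendsto_const_nhds.div_atTop (tendsto_atTop_add_const_right _ _ tendsto_natCast_atTop_atTop)

lemma logPlus_lipBowen_add_le (hinj : Function.Injective T) (n m : ℕ) (s : ℝ) (x : X) :
    logPlus (lipBowen T (n + m) s x) ≤
      logPlus (lipBowen T n s x) + logPlus (lipBowen T m s (T^[n] x)) :=
  (logPlus_mono (lipBowen_add_le hinj n m s x)).trans (logPlus_mul_le _ _)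

/-- The limit `s ↘ 0` of `logPlus_lipBowen_add_le`. It is taken after `logPlus`, because
multiplication on `[0, ∞]` is discontinuous at `(0, ∞)` while addition is continuous. -/
lemma logPlus_pointwiseLip_add_le (hinj : Function.Injective T) (n m : ℕ) (x : X) :
    logPlus (pointwiseLip T (n + m) x) ≤
      logPlus (pointwiseLip T n x) + logPlus (pointwiseLip T m (T^[n] x)) := by
  have h (n : ℕ) (x : X) : Tendsto (fun k : ℕ => logPlus (lipBowen T n (1 / ((k : ℝ) + 1)) x))
      atTop (𝓝 (logPlus (pointwiseLip T n x))) :=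
    (continuous_logPlus.tendsto _).comp
      (tendsto_lipBowen (fun k => by positivity) tendsto_one_div_scale n x)
  exact le_of_tendsto_of_tendsto' (h _ _) ((h n x).add (h m _))
    fun k => logPlus_lipBowen_add_le hinj n m _ x

variable [MeasurableSpace X] [BorelSpace X] {μ : Measure X}

lemma measurable_lipBowen (hT : Continuous T) (n : ℕ) (s : ℝ) : Measurable (lipBowen T n s) :=
  (lowerSemicontinuous_lipBowen hT n s).measurable

lemma measurable_pointwiseLip (hT : Continuous T) (n : ℕ) : Measurable (pointwiseLip T n) :=
  measurable_of_tendsto_metrizable (fun k => measurable_lipBowen hT n (1 / ((k : ℝ) + 1)))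
    (tendsto_pi_nhds.2 fun x =>
      tendsto_lipBowen (fun k => by positivity) tendsto_one_div_scale n x)

lemma logPlus_lipBowen_lt_top (hT : Continuous T) (hinj : Function.Injective T)
    (hμ : MeasurePreserving T μ μ) {r : ℝ}
    (hint : ∫⁻ x, logPlus (lipBowen T 1 r x) ∂μ < ⊤) :
    ∀ᵐ x ∂μ, ∀ n, logPlus (lipBowen T n r x) < ⊤ := by
  have h1 : ∀ᵐ x ∂μ, logPlus (lipBowen T 1 r x) < ⊤ :=
    ae_lt_top (continuous_logPlus.measurable.comp (measurable_lipBowen hT 1 r)) hint.ne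
  filter_upwards [ae_comp_iterate hμ h1] with x hx n
  induction n with
  | zero => simp [logPlus_of_le_one (lipBowen_zero_le r x)]
  | succ n ih =>
    exact (logPlus_lipBowen_add_le hinj n 1 r x).trans_lt (ENNReal.add_lt_top.2 ⟨ih, hx n⟩)

/-- Any log-subadditive family dominated by `lipBowen T · r` yields a subadditive process. It is
applied to `lipBowen T · s` with `s ≤ r` and to `pointwiseLip T`. -/
lemma isSubadditiveProcess_of_le (hT : Continuous T) (hinj : Function.Injective T)
    (hμ : MeasurePreserving T μ μ) {r : ℝ}
    (hint : ∫⁻ x, logPlus (lipBowen T 1 r x) ∂μ < ⊤) {L : ℕ → X → ℝ≥0∞}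
    (hm : ∀ n, Measurable (L n)) (hle : ∀ n x, L n x ≤ lipBowen T n r x)
    (hsub : ∀ n m x, logPlus (L (n + m) x) ≤ logPlus (L n x) + logPlus (L m (T^[n] x))) :
    IsSubadditiveCocycle T μ fun n x => (logPlus (L n x)).toReal where
  measurable n := (continuous_logPlus.measurable.comp (hm n)).ennreal_toReal
  nonneg n x := ENNReal.toReal_nonneg
  zero x := by rw [logPlus_of_le_one ((hle 0 x).trans (lipBowen_zero_le r x))]; rfl
  subadd := by
    filter_upwards [ae_comp_iterate hμ (logPlus_lipBowen_lt_top hT hinj hμ hint)] with x hx n m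
    have h1 : logPlus (L n x) ≠ ⊤ := ((logPlus_mono (hle n x)).trans_lt (hx 0 n)).ne
    have h2 : logPlus (L m (T^[n] x)) ≠ ⊤ := ((logPlus_mono (hle m _)).trans_lt (hx n m)).ne
    rw [← ENNReal.toReal_add h1 h2]
    exact ENNReal.toReal_mono (ENNReal.add_ne_top.2 ⟨h1, h2⟩) (hsub n m x)
  integrable_one :=
    integrable_toReal_of_lintegral_ne_top
      (continuous_logPlus.measurable.comp (hm 1)).aemeasurable
      ((lintegral_mono fun x => logPlus_mono (hle 1 x)).trans_lt hint).ne

end Bowen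

/-! ### The iterated limit -/

/-- An antitone sequence of integrable functions above `g` whose integrals come arbitrarily close
to `∫ g` converges to `g` almost everywhere and in `L¹`. -/
lemma iterated_limit {X : Type*} [MeasurableSpace X] {μ : Measure X} {g : X → ℝ} {h : ℕ → X → ℝ}
    (hg : Integrable g μ) (hh : ∀ m, Integrable (h m) μ)
    (hanti : ∀ᵐ x ∂μ, Antitone fun m => h m x) (hge : ∀ᵐ x ∂μ, ∀ m, g x ≤ h m x)
    (hlim : ∀ ε : ℝ, 0 < ε → ∃ m, ∫ x, h m x ∂μ < ∫ x, g x ∂μ + ε) :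
    (∀ᵐ x ∂μ, Tendsto (fun m => h m x) atTop (𝓝 (g x))) ∧
      Tendsto (fun m => ∫ x, |h m x - g x| ∂μ) atTop (𝓝 0) := by
  have hL1 : Tendsto (fun m => ∫ x, |h m x - g x| ∂μ) atTop (𝓝 0) := by
    have heq : ∀ m, ∫ x, |h m x - g x| ∂μ = ∫ x, h m x ∂μ - ∫ x, g x ∂μ := fun m => by
      rw [← integral_sub (hh m) hg]
      refine integral_congr_ae ?_
      filter_upwards [hge] with x hx using abs_of_nonneg (sub_nonneg.2 (hx m))
    rw [tendsto_order]
    refine ⟨fun a ha => Eventually.of_forall fun m =>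
      ha.trans_le (integral_nonneg fun x => abs_nonneg _), fun ε hε => ?_⟩
    obtain ⟨m₀, hm₀⟩ := hlim ε hε
    filter_upwards [eventually_ge_atTop m₀] with m hm
    have : ∫ x, h m x ∂μ ≤ ∫ x, h m₀ x ∂μ := integral_mono_ae (hh m) (hh m₀) (by
      filter_upwards [hanti] with x hx using hx hm)
    rw [heq]
    linarith
  refine ⟨?_, hL1⟩
  have hmeas : TendstoInMeasure μ h atTop g := by
    refine tendstoInMeasure_of_tendsto_eLpNorm one_ne_zero
      (fun m => (hh m).aestronglyMeasurable) hg.aestronglyMeasurable ?_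
    have := ENNReal.tendsto_ofReal hL1
    rw [ENNReal.ofReal_zero] at this
    refine this.congr fun m => ?_
    rw [eLpNorm_one_eq_lintegral_enorm,
      ← ofReal_integral_norm_eq_lintegral_enorm ((hh m).sub hg)]
    rfl
  obtain ⟨φ, hφ, hae⟩ := hmeas.exists_seq_tendsto_ae
  filter_upwards [hanti, hge, hae] with x h1 h2 h3
  have h4 := tendsto_atTop_ciInf h1 ⟨g x, by rintro _ ⟨m, rfl⟩; exact h2 m⟩
  rwa [tendsto_nhds_unique (h4.comp hφ.tendsto_atTop) h3] at h4

/-! ### Asymptotic Lipschitz exponents -/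

/-- under the integrability condition `∫ log⁺ 𝓛₁ʳ dμ < ∞`, the limits
`χ(x) = limₙ (1/n) log⁺𝓛ₙ(x)` and `Λˢ(x) = limₙ (1/n) log⁺𝓛ₙˢ(x)` (for `0 < s ≤ r`)
exist `μ`-a.e. and in `L¹(μ)`, and `χ = lim_m Λ^{s_m}` for any `s_m ↘ 0`, `μ`-a.e. and
in `L¹(μ)`. -/
theorem stmt13 {X : Type*} [MetricSpace X] [CompactSpace X] [MeasurableSpace X] [BorelSpace X]
    (T : X ≃ₜ X) (μ : Measure X) [IsProbabilityMeasure μ]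
    (hT : MeasurePreserving (⇑T) μ μ)
    (r : ℝ) (hr : 0 < r)
    (hint : ∫⁻ x, logPlus (lipBowen (⇑T) 1 r x) ∂μ < ⊤) :
    ∃ (χ : X → ℝ) (Λ : ℝ → X → ℝ),
      -- (i) χ(x) = limₙ (1/n) log⁺ 𝓛ₙ(x) exists μ-a.e. and in L¹(μ)
      ((∀ᵐ x ∂μ, Tendsto
          (fun n : ℕ => (logPlus (pointwiseLip (⇑T) n x)).toReal / (n : ℝ)) atTop (𝓝 (χ x))) ∧
        Tendsto (fun n : ℕ =>
          ∫ x, |(logPlus (pointwiseLip (⇑T) n x)).toReal / (n : ℝ) - χ x| ∂μ) atTop (𝓝 0)) ∧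
      -- (ii) Λˢ(x) = limₙ (1/n) log⁺ 𝓛ₙˢ(x) exists μ-a.e. and in L¹(μ) for 0 < s ≤ r
      (∀ s : ℝ, 0 < s → s ≤ r →
        (∀ᵐ x ∂μ, Tendsto
          (fun n : ℕ => (logPlus (lipBowen (⇑T) n s x)).toReal / (n : ℝ)) atTop (𝓝 (Λ s x))) ∧
        Tendsto (fun n : ℕ =>
          ∫ x, |(logPlus (lipBowen (⇑T) n s x)).toReal / (n : ℝ) - Λ s x| ∂μ) atTop (𝓝 0)) ∧
      -- (iii) χ = lim_m Λ^{s_m} μ-a.e. and in L¹(μ) whenever s_m ↘ 0 with s₀ ≤ r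
      (∀ s : ℕ → ℝ, StrictAnti s → (∀ m, 0 < s m) → s 0 ≤ r → Tendsto s atTop (𝓝 0) →
        (∀ᵐ x ∂μ, Tendsto (fun m : ℕ => Λ (s m) x) atTop (𝓝 (χ x))) ∧
        Tendsto (fun m : ℕ => ∫ x, |Λ (s m) x - χ x| ∂μ) atTop (𝓝 0)) := by
  have hTc : Continuous T := T.continuous
  have hinj : Function.Injective T := T.injective
  set Ψ : ℕ → X → ℝ := fun n x => (logPlus (pointwiseLip T n x)).toReal with hΨ
  set Φ : ℝ → ℕ → X → ℝ := fun s n x => (logPlus (lipBowen T n s x)).toReal with hΦ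
  have pΨ : IsSubadditiveCocycle T μ Ψ :=
    isSubadditiveProcess_of_le hTc hinj hT hint (measurable_pointwiseLip hTc)
      (fun n x => pointwiseLip_le n hr x) (fun n m x => logPlus_pointwiseLip_add_le hinj n m x)
  have pΦ : ∀ s ≤ r, IsSubadditiveCocycle T μ (Φ s) := fun s hs =>
    isSubadditiveProcess_of_le hTc hinj hT hint (fun n => measurable_lipBowen hTc n s)
      (fun n x => lipBowen_mono n x hs) (fun n m x => logPlus_lipBowen_add_le hinj n m s x)
  refine ⟨IsSubadditiveCocycle.lim Ψ, fun s => IsSubadditiveCocycle.lim (Φ s),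
    ⟨pΨ.tendsto_ae hT, pΨ.tendsto_L1 hT⟩,
    fun s _ hs => ⟨(pΦ s hs).tendsto_ae hT, (pΦ s hs).tendsto_L1 hT⟩, ?_⟩
  intro s hs hpos hs0 hlim
  have hsr : ∀ m, s m ≤ r := fun m => (hs.antitone (Nat.zero_le m)).trans hs0
  have hfin := logPlus_lipBowen_lt_top hTc hinj hT hint
  have hconv : ∀ᵐ x ∂μ, ∀ m, Tendsto (fun n : ℕ => Φ (s m) n x / n) atTop
      (𝓝 (IsSubadditiveCocycle.lim (Φ (s m)) x)) :=
    ae_all_iff.2 fun m => (pΦ _ (hsr m)).tendsto_ae hT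
  refine iterated_limit (pΨ.integrable_lim hT) (fun m => (pΦ _ (hsr m)).integrable_lim hT) ?_ ?_ ?_
  · filter_upwards [hconv, hfin] with x hx hf a b hab
    refine le_of_tendsto_of_tendsto' (hx b) (hx a) fun n => ?_
    have := ENNReal.toReal_mono ((logPlus_mono (lipBowen_mono n x (hsr a))).trans_lt (hf n)).ne
      (logPlus_mono (lipBowen_mono (T := T) n x (hs.antitone hab)))
    simp only [hΦ]
    gcongr
  · filter_upwards [hconv, hfin, pΨ.tendsto_ae hT] with x hx hf hψ m
    refine le_of_tendsto_of_tendsto' hψ (hx m) fun n => ?_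
    have := ENNReal.toReal_mono ((logPlus_mono (lipBowen_mono n x (hsr m))).trans_lt (hf n)).ne
      (logPlus_mono (pointwiseLip_le (T := T) n (hpos m) x))
    simp only [hΦ, hΨ]
    gcongr
  · -- Exchange of infima: `∫ Λ^{s_m} ≤ (1/n) ∫ Φ (s_m) n`, which for fixed `n` tends to
    -- `(1/n) ∫ Ψ n`, and the latter is close to `∫ χ` for large `n`.
    intro ε hε
    obtain ⟨n, hn, hn0⟩ := (((tendsto_order.1 (pΨ.tendsto_integral hT)).2 _
      (lt_add_of_pos_right _ hε)).and (eventually_gt_atTop 0)).exists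
    have hdom : Tendsto (fun m => ∫ x, Φ (s m) n x ∂μ) atTop (𝓝 (∫ x, Ψ n x ∂μ)) := by
      refine tendsto_integral_of_dominated_convergence (Φ r n)
        (fun m => ((pΦ _ (hsr m)).measurable n).aestronglyMeasurable)
        ((pΦ r le_rfl).integrable hT n) (fun m => ?_) ?_
      · filter_upwards [hfin] with x hf
        rw [Real.norm_of_nonneg ((pΦ _ (hsr m)).nonneg n x)]
        exact ENNReal.toReal_mono (hf n).ne (logPlus_mono (lipBowen_mono n x (hsr m)))
      · filter_upwards [hfin] with x hf
        exact (ENNReal.tendsto_toReal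
          ((logPlus_mono (pointwiseLip_le n hr x)).trans_lt (hf n)).ne).comp
          ((continuous_logPlus.tendsto _).comp (tendsto_lipBowen hpos hlim n x))
    obtain ⟨m, hm⟩ := ((tendsto_order.1 (hdom.div_const (n : ℝ))).2 _ hn).exists
    exact ⟨m, ((pΦ _ (hsr m)).integral_lim_le hT hn0).trans_lt hm⟩
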